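/- arXiv:1104.3218 — 3 statements merged into one kernel-verified Lean document; each statement's English description precedes it below -/
import Mathlib

section
/- For every x > 0, the reducer of the exponential density ρ(t) = e^{−t} on [0,∞) satisfies lim_{ε→0⁺} 2∫₀^∞ (x−t)·e^{−t}/((x−t)²+ε²) dt = 2·[ln(x) − ∫₀^∞ e^{−t}·ln|x−t| dt]. -/
open MeasureTheory Filter Set

/-!
The kernel `(x - t) / ((x - t)² + ε²)` is the `t`-derivative of `-½ log ((x - t)² + ε²)`.
Integrating by parts moves the derivative onto the density and leaves only an integrable logarithmic
singularity, for which `|log (y² + ε²)| ≤ 2 |log |y|| + ε²` provides the dominating function; the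
limit `ε → 0` can then be taken under the integral sign. For the density `e⁻ᵗ` the boundary term at
`0` tends to `log |x|`.

Since `Real.log` is even, `log |y|` is written `Real.log y` in the lemmas.
-/

open scoped Topology

section LogSqAddSq

lemma log_sq_eq_two_mul_log (y : ℝ) : Real.log (y ^ 2) = 2 * Real.log y := by
  rw [Real.log_pow, Nat.cast_ofNat]

lemma abs_log_sq_add_sq_le {y : ℝ} (hy : y ≠ 0) (ε : ℝ) :
    |Real.log (y ^ 2 + ε ^ 2)| ≤ 2 * |Real.log y| + ε ^ 2 := by
  have lower : 2 * Real.log y ≤ Real.log (y ^ 2 + ε ^ 2) :=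
    calc 2 * Real.log y = Real.log (y ^ 2) := (log_sq_eq_two_mul_log y).symm
      _ ≤ Real.log (y ^ 2 + ε ^ 2) :=
          Real.log_le_log (by positivity) (le_add_of_nonneg_right (sq_nonneg ε))
  have log_max_le : Real.log (max 1 (y ^ 2)) ≤ 2 * |Real.log y| := by
    rcases max_choice 1 (y ^ 2) with h | h <;> rw [h]
    · rw [Real.log_one]; positivity
    · rw [log_sq_eq_two_mul_log]; gcongr; exact le_abs_self _
  have upper : Real.log (y ^ 2 + ε ^ 2) ≤ 2 * |Real.log y| + ε ^ 2 :=
    calc Real.log (y ^ 2 + ε ^ 2)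
        ≤ Real.log (max 1 (y ^ 2) * (1 + ε ^ 2)) := by
          refine Real.log_le_log (by positivity) ?_
          nlinarith [le_max_left 1 (y ^ 2), le_max_right 1 (y ^ 2), sq_nonneg ε]
      _ = Real.log (max 1 (y ^ 2)) + Real.log (1 + ε ^ 2) :=
          Real.log_mul (by positivity) (by positivity)
      _ ≤ 2 * |Real.log y| + ε ^ 2 := by
          gcongr
          linarith [Real.log_le_sub_one_of_pos (show 0 < 1 + ε ^ 2 by positivity)]
  refine abs_le.2 ⟨?_, upper⟩
  linarith [neg_abs_le (Real.log y), sq_nonneg ε]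

lemma norm_mul_log_sq_add_sq_le (c : ℝ) {y : ℝ} (hy : y ≠ 0) (ε : ℝ) :
    ‖c * Real.log (y ^ 2 + ε ^ 2)‖ ≤ 2 * ‖c * Real.log y‖ + ε ^ 2 * ‖c‖ := by
  simp only [norm_mul, Real.norm_eq_abs]
  calc |c| * |Real.log (y ^ 2 + ε ^ 2)|
      ≤ |c| * (2 * |Real.log y| + ε ^ 2) := by gcongr; exact abs_log_sq_add_sq_le hy ε
    _ = 2 * (|c| * |Real.log y|) + ε ^ 2 * |c| := by ring

lemma tendsto_log_sq_add_sq {y : ℝ} (hy : y ≠ 0) :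
    Tendsto (fun ε : ℝ => Real.log (y ^ 2 + ε ^ 2)) (𝓝 0) (𝓝 (2 * Real.log y)) := by
  rw [← log_sq_eq_two_mul_log]
  have hsum : Tendsto (fun ε : ℝ => y ^ 2 + ε ^ 2) (𝓝 0) (𝓝 (y ^ 2)) :=
    Continuous.tendsto' (by fun_prop) _ _ (by simp)
  exact hsum.log (pow_ne_zero 2 hy)

variable {α : Type*} [MeasurableSpace α] {μ : Measure α} {f g : α → ℝ}

lemma integrable_mul_log_sq_add_sq (hg : AEMeasurable g μ) (hg₀ : ∀ᵐ t ∂μ, g t ≠ 0)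
    (hf : Integrable f μ) (hlog : Integrable (fun t => f t * Real.log (g t)) μ) (ε : ℝ) :
    Integrable (fun t => f t * Real.log (g t ^ 2 + ε ^ 2)) μ := by
  refine ((hlog.norm.const_mul 2).add (hf.norm.const_mul (ε ^ 2))).mono'
    (hf.1.mul ((hg.pow_const 2).add_const _).log.aestronglyMeasurable) ?_
  filter_upwards [hg₀] with t ht using norm_mul_log_sq_add_sq_le _ ht ε

lemma tendsto_integral_mul_log_sq_add_sq (hg : AEMeasurable g μ) (hg₀ : ∀ᵐ t ∂μ, g t ≠ 0)
    (hf : Integrable f μ) (hlog : Integrable (fun t => f t * Real.log (g t)) μ) :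
    Tendsto (fun ε : ℝ => ∫ t, f t * Real.log (g t ^ 2 + ε ^ 2) ∂μ) (𝓝 0)
      (𝓝 (2 * ∫ t, f t * Real.log (g t) ∂μ)) := by
  rw [← integral_const_mul]
  simp only [mul_left_comm (2 : ℝ)]
  refine tendsto_integral_filter_of_dominated_convergence
    (fun t => 2 * ‖f t * Real.log (g t)‖ + ‖f t‖)
    (Eventually.of_forall fun ε => (integrable_mul_log_sq_add_sq hg hg₀ hf hlog ε).1)
    ?_ ((hlog.norm.const_mul 2).add hf.norm) ?_
  · filter_upwards [Metric.closedBall_mem_nhds (0 : ℝ) one_pos] with ε hε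
    have hε_sq : ε ^ 2 ≤ 1 := (sq_le_one_iff_abs_le_one ε).2 (mem_closedBall_zero_iff.1 hε)
    filter_upwards [hg₀] with t ht
    refine (norm_mul_log_sq_add_sq_le _ ht ε).trans ?_
    gcongr
    exact mul_le_of_le_one_left (norm_nonneg _) hε_sq
  · filter_upwards [hg₀] with t ht using (tendsto_log_sq_add_sq ht).const_mul _

end LogSqAddSq

section Kernel

lemma hasDerivAt_neg_half_log_sub_sq_add_sq {ε : ℝ} (hε : ε ≠ 0) (x t : ℝ) :
    HasDerivAt (fun t => -(1 / 2) * Real.log ((x - t) ^ 2 + ε ^ 2))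
      ((x - t) / ((x - t) ^ 2 + ε ^ 2)) t := by
  have hinner : HasDerivAt (fun t : ℝ => (x - t) ^ 2 + ε ^ 2) (2 * (x - t) * -1) t := by
    simpa using (((hasDerivAt_id t).const_sub x).pow 2).add_const (ε ^ 2)
  have hpos : 0 < (x - t) ^ 2 + ε ^ 2 := by positivity
  exact ((hinner.log hpos.ne').const_mul (-(1 / 2))).congr_deriv (by ring)

lemma abs_div_sq_add_sq_le (y : ℝ) {ε : ℝ} (hε : ε ≠ 0) :
    |y / (y ^ 2 + ε ^ 2)| ≤ 1 / (2 * |ε|) := by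
  rw [abs_div, abs_of_pos (show 0 < y ^ 2 + ε ^ 2 by positivity),
    div_le_div_iff₀ (by positivity) (by positivity)]
  linarith [two_mul_le_add_sq |y| |ε|, sq_abs y, sq_abs ε]

lemma integrable_mul_div_sq_add_sq {α : Type*} [MeasurableSpace α] {μ : Measure α} {f g : α → ℝ}
    (hf : Integrable f μ) (hg : AEMeasurable g μ) {ε : ℝ} (hε : ε ≠ 0) :
    Integrable (fun t => f t * (g t / (g t ^ 2 + ε ^ 2))) μ :=
  hf.mul_bdd (hg.div ((hg.pow_const 2).add_const _)).aestronglyMeasurable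
    (Eventually.of_forall fun t => abs_div_sq_add_sq_le (g t) hε)

end Kernel

lemma ae_sub_ne_zero {G : Type*} [AddGroup G] [MeasurableSpace G] (μ : Measure G)
    [NullSingletonClass μ] (x : G) : ∀ᵐ t ∂μ, x - t ≠ 0 := by
  filter_upwards [Measure.ae_ne μ x] with t ht using sub_ne_zero.2 ht.symm

section HalfLine

variable {ρ ρ' : ℝ → ℝ} {a x : ℝ}

lemma integral_Ioi_mul_div_sq_add_sq
    (hcont : ContinuousWithinAt ρ (Ioi a) a) (hderiv : ∀ t ∈ Ioi a, HasDerivAt ρ (ρ' t) t)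
    (hρ : IntegrableOn ρ (Ioi a)) (hρ' : IntegrableOn ρ' (Ioi a))
    (hρ_log : IntegrableOn (fun t => ρ t * Real.log (x - t)) (Ioi a))
    (hρ'_log : IntegrableOn (fun t => ρ' t * Real.log (x - t)) (Ioi a)) {ε : ℝ} (hε : ε ≠ 0) :
    ∫ t in Ioi a, (x - t) * ρ t / ((x - t) ^ 2 + ε ^ 2) =
      (ρ a * Real.log ((x - a) ^ 2 + ε ^ 2) +
        ∫ t in Ioi a, ρ' t * Real.log ((x - t) ^ 2 + ε ^ 2)) / 2 := by
  set v : ℝ → ℝ := fun t => -(1 / 2) * Real.log ((x - t) ^ 2 + ε ^ 2) with hv_def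
  have hv (t : ℝ) : HasDerivAt v ((x - t) / ((x - t) ^ 2 + ε ^ 2)) t :=
    hasDerivAt_neg_half_log_sub_sq_add_sq hε x t
  have integrable_mul_v {f : ℝ → ℝ} (hf : IntegrableOn f (Ioi a))
      (hlog : IntegrableOn (fun t => f t * Real.log (x - t)) (Ioi a)) :
      IntegrableOn (f * v) (Ioi a) := by
    have hint := (integrable_mul_log_sq_add_sq (by fun_prop) (ae_sub_ne_zero _ x)
      hf hlog ε).const_mul (-(1 / 2))
    exact hint.congr (.of_forall fun t => mul_left_comm _ _ _)
  have hρv' := integrable_mul_div_sq_add_sq hρ (g := fun t => x - t) (by fun_prop) hε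
  have hρ'v := integrable_mul_v hρ' hρ'_log
  have boundary_left : Tendsto (ρ * v) (𝓝[>] a) (𝓝 (ρ a * v a)) :=
    hcont.mul (hv a).continuousAt.continuousWithinAt
  have boundary_atTop : Tendsto (ρ * v) atTop (𝓝 0) :=
    tendsto_zero_of_hasDerivAt_of_integrableOn_Ioi
      (fun t ht => (hderiv t ht).mul (hv t)) (hρ'v.add hρv') (integrable_mul_v hρ hρ_log)
  have parts := integral_Ioi_mul_deriv_eq_deriv_mul hderiv (fun t _ => hv t) hρv' hρ'v
    boundary_left boundary_atTop
  simp only [hv_def, mul_left_comm _ (-(1 / 2) : ℝ), integral_const_mul] at parts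
  simp only [mul_comm (x - _), mul_div_assoc, parts]
  ring

theorem tendsto_integral_Ioi_mul_div_sq_add_sq (hxa : x ≠ a)
    (hcont : ContinuousWithinAt ρ (Ioi a) a) (hderiv : ∀ t ∈ Ioi a, HasDerivAt ρ (ρ' t) t)
    (hρ : IntegrableOn ρ (Ioi a)) (hρ' : IntegrableOn ρ' (Ioi a))
    (hρ_log : IntegrableOn (fun t => ρ t * Real.log (x - t)) (Ioi a))
    (hρ'_log : IntegrableOn (fun t => ρ' t * Real.log (x - t)) (Ioi a)) :
    Tendsto (fun ε : ℝ => ∫ t in Ioi a, (x - t) * ρ t / ((x - t) ^ 2 + ε ^ 2)) (𝓝[≠] 0)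
      (𝓝 (ρ a * Real.log (x - a) + ∫ t in Ioi a, ρ' t * Real.log (x - t))) := by
  have boundary := (tendsto_log_sq_add_sq (sub_ne_zero.2 hxa)).const_mul (ρ a)
  have integral := tendsto_integral_mul_log_sq_add_sq (g := fun t => x - t) (by fun_prop)
    (ae_sub_ne_zero _ x) hρ' hρ'_log
  have limit := ((boundary.add integral).div_const 2).mono_left (nhdsWithin_le_nhds (s := {0}ᶜ))
  rw [mul_left_comm, ← mul_add, mul_div_cancel_left₀ _ two_ne_zero] at limit
  refine limit.congr' ?_
  filter_upwards [self_mem_nhdsWithin] with ε hε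
  exact (integral_Ioi_mul_div_sq_add_sq hcont hderiv hρ hρ' hρ_log hρ'_log hε).symm

lemma integrableOn_Ioi_mul_log_sub {f : ℝ → ℝ} (hf : ContinuousOn f (Ici a))
    (hlin : IntegrableOn (fun t => f t * (x - t)) (Ioi a)) :
    IntegrableOn (fun t => f t * Real.log (x - t)) (Ioi a) := by
  set b := max a (x + 1)
  have hab : a ≤ b := le_max_left _ _
  rw [← Ioc_union_Ioi_eq_Ioi hab]
  refine IntegrableOn.union ?_ ?_
  · have hlog : IntervalIntegrable (fun t => Real.log (x - t)) volume a b := by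
      simpa using
        (intervalIntegral.intervalIntegrable_log' (a := x - a) (b := x - b)).comp_sub_left x
    refine (intervalIntegrable_iff_integrableOn_Ioc_of_le hab).1 (hlog.continuousOn_mul ?_)
    exact hf.mono (uIcc_of_le hab ▸ Icc_subset_Ici_self)
  · have hmeas : AEStronglyMeasurable f (volume.restrict (Ioi b)) :=
      (hf.mono (Ioi_subset_Ici hab)).aestronglyMeasurable measurableSet_Ioi
    have hlog_meas : Measurable fun t : ℝ => Real.log (x - t) := by fun_prop
    refine Integrable.mono (hlin.mono_set (Ioi_subset_Ioi hab))
      (hmeas.mul hlog_meas.aestronglyMeasurable) ?_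
    filter_upwards [ae_restrict_mem measurableSet_Ioi] with t ht
    have one_le : 1 ≤ |x - t| := by
      have : x + 1 < t := (le_max_right _ _).trans_lt ht
      rw [abs_sub_comm]
      exact (by linarith : 1 ≤ t - x).trans (le_abs_self _)
    have log_le : |Real.log (x - t)| ≤ |x - t| := by
      rw [← Real.log_abs, abs_of_nonneg (Real.log_nonneg one_le)]
      exact Real.log_le_self (abs_nonneg _)
    simp only [norm_mul, Real.norm_eq_abs]
    gcongr

end HalfLine

lemma integrableOn_exp_neg_mul_log_sub (x : ℝ) :
    IntegrableOn (fun t => Real.exp (-t) * Real.log (x - t)) (Ioi 0) := by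
  refine integrableOn_Ioi_mul_log_sub (by fun_prop) ?_
  have hid : IntegrableOn (fun t => Real.exp (-t) * t) (Ioi 0) := by
    simpa [show (2 : ℝ) - 1 = 1 by norm_num] using Real.GammaIntegral_convergent two_pos
  simp only [mul_sub]
  exact ((integrableOn_exp_neg_Ioi 0).mul_const x).sub hid

theorem reducer_exponential_general (x : ℝ) (hx : x ≠ 0) :
    Tendsto
      (fun ε : ℝ =>
        2 * ∫ t in Ioi (0 : ℝ), (x - t) * Real.exp (-t) / ((x - t) ^ 2 + ε ^ 2))
      (𝓝[>] 0)
      (𝓝 (2 * (Real.log |x| - ∫ t in Ioi (0 : ℝ), Real.exp (-t) * Real.log |x - t|))) := by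
  have hderiv (t : ℝ) : HasDerivAt (fun t => Real.exp (-t)) (-Real.exp (-t)) t := by
    simpa using (hasDerivAt_neg t).exp
  have hexp := integrableOn_exp_neg_Ioi 0
  have hexp_log := integrableOn_exp_neg_mul_log_sub x
  have limit := tendsto_integral_Ioi_mul_div_sq_add_sq hx
    (hderiv 0).continuousAt.continuousWithinAt (fun t _ => hderiv t) hexp hexp.neg hexp_log
    (by simpa only [neg_mul, Pi.neg_def] using hexp_log.neg)
  simp only [neg_mul, integral_neg, neg_zero, Real.exp_zero, one_mul, sub_zero,
    ← sub_eq_add_neg] at limit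
  simpa only [Real.log_abs] using (limit.mono_left (nhdsGT_le_nhdsNE 0)).const_mul 2

/-- For the exponential density `ρ(t) = e^{−t}` on `[0,∞)` and every `x > 0`,
`lim_{ε→0⁺} 2∫₀^∞ (x−t)·e^{−t}/((x−t)²+ε²) dt = 2·[ln x − ∫₀^∞ e^{−t}·ln|x−t| dt]`. -/
theorem reducer_exponential (x : ℝ) (hx : 0 < x) :
    Tendsto
      (fun ε : ℝ =>
        2 * ∫ t in Ioi (0 : ℝ), (x - t) * Real.exp (-t) / ((x - t) ^ 2 + ε ^ 2))
      (nhdsWithin 0 (Ioi 0))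
      (nhds (2 * (Real.log x - ∫ t in Ioi (0 : ℝ), Real.exp (-t) * Real.log |x - t|))) := by
  simpa only [abs_of_pos hx] using reducer_exponential_general x hx.ne'
end

section
/- Let ρ, μ : [0,1] → ℝ be Lipschitz nonnegative functions with ρ(x) > 0 for x in (0,1), let c₁ = ∫₀¹ t·ρ(t) dt, and define φ(x) = 2ρ(x)·ln(x/(1−x)) − 2∫₀¹ (ρ(t)−ρ(x))/(t−x) dt for x in (0,1). Assume that for all x in (0,1): 2μ(x)·ln(x/(1−x)) − 2∫₀¹ (μ(t)−μ(x))/(t−x) dt = 2(x−c₁) − φ(x)·μ(x)/ρ(x). Let g : [0,1] → ℝ be continuous and such that the function h(x) = μ(x)·g(x)/ρ(x) extends to a Lipschitz function on [0,1]. Then for every x in (0,1): φ(x)·(μ(x)/ρ(x))·g(x) − ∫₀¹ (h(t)−h(x))/(t−x)·ρ(t) dt = (x−c₁)·g(x) − ∫₀¹ (g(t)−g(x))/(t−x)·μ(t) dt. (Identity (3.4.3), simplifying the solution of the integral equation T_ρ(f) = g.) -/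
open MeasureTheory Filter Set

/-!
Let `R ν` denote the reducer of `ν`. Integrating the Leibniz rule for difference quotients gives
`R (f ν) = f · R ν - 2 T_ν f`. Since `h ρ = g μ` on `(0,1)`, this product rule computes the same
reducer in two ways, so `h · R ρ - 2 T_ρ h = g · R μ - 2 T_μ g`; formula (3.4.1) then
eliminates `R μ`.
-/

section Slope

theorem slope_mul {k : Type*} [Field k] (f g : k → k) (a b : k) :
    slope (f * g) a b = slope f a b * g b + f a * slope g a b := by
  simp only [slope_def_field, Pi.mul_apply]
  ring

theorem eqOn_slope {k E : Type*} [Field k] [AddCommGroup E] [Module k E] {f g : k → E} {s : Set k}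
    (hfg : EqOn f g s) {a : k} (ha : a ∈ s) : EqOn (slope f a) (slope g a) s := fun b hb => by
  simp only [slope_def_module, hfg ha, hfg hb]

variable {E : Type*} [NormedAddCommGroup E] [NormedSpace ℝ E] {f : ℝ → E} {K : NNReal}

theorem norm_slope_le_of_lipschitzOnWith {s : Set ℝ} (hf : LipschitzOnWith K f s) {x t : ℝ}
    (hx : x ∈ s) (ht : t ∈ s) : ‖slope f x t‖ ≤ K := by
  rw [slope_def_module, norm_smul, norm_inv, inv_mul_eq_div]
  exact div_le_of_le_mul₀ (norm_nonneg _) K.coe_nonneg (hf.norm_sub_le ht hx)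

theorem intervalIntegrable_slope_of_lipschitzOnWith {m : Measure ℝ} [IsLocallyFiniteMeasure m]
    {a b x : ℝ} (hf : LipschitzOnWith K f (uIcc a b)) (hx : x ∈ uIcc a b) :
    IntervalIntegrable (slope f x) m a b := by
  have f_meas : AEStronglyMeasurable f (m.restrict (uIcc a b)) :=
    hf.continuousOn.aestronglyMeasurable measurableSet_uIcc
  have inv_meas : Measurable fun t : ℝ => (t - x)⁻¹ := by fun_prop
  have slope_integrable : IntegrableOn (slope f x) (uIcc a b) m :=
    IntegrableOn.of_bound isCompact_uIcc.measure_lt_top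
      (inv_meas.aestronglyMeasurable.smul (f_meas.sub aestronglyMeasurable_const)) K
      ((ae_restrict_mem measurableSet_uIcc).mono fun _ ht =>
        norm_slope_le_of_lipschitzOnWith hf hx ht)
  exact slope_integrable.intervalIntegrable

theorem intervalIntegrable_slope_mul {m : Measure ℝ} {f g : ℝ → ℝ} {a b x : ℝ}
    (hf : IntervalIntegrable (slope f x) m a b) (hg : IntervalIntegrable (slope g x) m a b)
    (hgc : ContinuousOn g (uIcc a b)) : IntervalIntegrable (slope (f * g) x) m a b := by
  simpa only [← slope_mul] using (hf.mul_continuousOn hgc).add (hg.const_mul (f x))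

end Slope

/-- The operator `T_ν` on functions on `[0,1]` attached to a density `ν`. The difference quotient
takes the junk value `0` at `t = x`, which does not affect the integral. -/
noncomputable def divDiffOperator (ν f : ℝ → ℝ) (x : ℝ) : ℝ :=
  ∫ t in (0 : ℝ)..1, slope f x t * ν t

/-- The reducer of a density `ν` on `[0,1]`, to be evaluated at points of `(0,1)`. -/
noncomputable def reducer (ν : ℝ → ℝ) (x : ℝ) : ℝ :=
  2 * ν x * Real.log (x / (1 - x)) - 2 * ∫ t in (0 : ℝ)..1, slope ν x t

section Reducer

variable {ρ μ f g h : ℝ → ℝ} {x : ℝ}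

theorem reducer_congr (hρμ : EqOn ρ μ (Ioo 0 1)) (hx : x ∈ Ioo (0 : ℝ) 1) :
    reducer ρ x = reducer μ x := by
  rw [reducer, reducer, hρμ hx,
    intervalIntegral.integral_congr_Ioo_of_le zero_le_one (eqOn_slope hρμ hx)]

theorem reducer_mul (hρ : IntervalIntegrable (slope ρ x) volume 0 1)
    (hfρ : IntervalIntegrable (slope (f * ρ) x) volume 0 1) :
    reducer (f * ρ) x = f x * reducer ρ x - 2 * divDiffOperator ρ f x := by
  have operator_eq : divDiffOperator ρ f x =
      (∫ t in (0 : ℝ)..1, slope (f * ρ) x t) - f x * ∫ t in (0 : ℝ)..1, slope ρ x t := by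
    rw [← intervalIntegral.integral_const_mul,
      ← intervalIntegral.integral_sub hfρ (hρ.const_mul (f x))]
    simp only [divDiffOperator, slope_mul, add_sub_cancel_right]
  rw [operator_eq, reducer, reducer, Pi.mul_apply]
  ring

theorem mul_reducer_sub_divDiffOperator_eq {Kρ Kμ Kh : NNReal}
    (hρ : LipschitzOnWith Kρ ρ (Icc 0 1)) (hμ : LipschitzOnWith Kμ μ (Icc 0 1))
    (hh : LipschitzOnWith Kh h (Icc 0 1)) (hhg : EqOn (h * ρ) (g * μ) (Ioo 0 1))
    (hx : x ∈ Ioo (0 : ℝ) 1) :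
    h x * reducer ρ x - 2 * divDiffOperator ρ h x =
      g x * reducer μ x - 2 * divDiffOperator μ g x := by
  have x_mem : x ∈ uIcc (0 : ℝ) 1 := Icc_subset_uIcc (Ioo_subset_Icc_self hx)
  rw [← uIcc_of_le (zero_le_one' ℝ)] at hρ hμ hh
  have ρ_int : IntervalIntegrable (slope ρ x) volume 0 1 :=
    intervalIntegrable_slope_of_lipschitzOnWith hρ x_mem
  have hρ_int : IntervalIntegrable (slope (h * ρ) x) volume 0 1 :=
    intervalIntegrable_slope_mul (intervalIntegrable_slope_of_lipschitzOnWith hh x_mem)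
      ρ_int hρ.continuousOn
  have gμ_int : IntervalIntegrable (slope (g * μ) x) volume 0 1 :=
    hρ_int.congr_uIoo (uIoo_of_le (zero_le_one' ℝ) ▸ eqOn_slope hhg hx)
  rw [← reducer_mul ρ_int hρ_int, reducer_congr hhg hx,
    reducer_mul (intervalIntegrable_slope_of_lipschitzOnWith hμ x_mem) gμ_int]

/-- In formula (3.4.1) the constant `d` is `x - c₁`. -/
theorem solution_simplification_general {Kρ Kμ Kh : NNReal}
    (hρ : LipschitzOnWith Kρ ρ (Icc 0 1)) (hμ : LipschitzOnWith Kμ μ (Icc 0 1))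
    (hh : LipschitzOnWith Kh h (Icc 0 1)) (hρ_ne : ∀ t ∈ Ioo (0 : ℝ) 1, ρ t ≠ 0)
    (h_eq : ∀ t ∈ Ioo (0 : ℝ) 1, h t = μ t * g t / ρ t) (hx : x ∈ Ioo (0 : ℝ) 1) {d : ℝ}
    (hd : reducer μ x = 2 * d - reducer ρ x * μ x / ρ x) :
    reducer ρ x * (μ x / ρ x) * g x - divDiffOperator ρ h x =
      d * g x - divDiffOperator μ g x := by
  have hhg : EqOn (h * ρ) (g * μ) (Ioo 0 1) := fun t ht => by
    rw [Pi.mul_apply, Pi.mul_apply, h_eq t ht, div_mul_cancel₀ _ (hρ_ne t ht), mul_comm]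
  have key := mul_reducer_sub_divDiffOperator_eq hρ hμ hh hhg hx
  rw [hd, h_eq x hx] at key
  linear_combination key / 2

end Reducer

/-- Identity (3.4.3), simplifying the solution of the integral equation `T_ρ(f) = g`:
under formula (3.4.1) relating the reducers of `ρ` and of its secondary measure `μ`,
for every `x ∈ (0,1)`,
`φ(x)·(μ(x)/ρ(x))·g(x) − T_ρ(μ·g/ρ)(x) = (x−c₁)·g(x) − T_μ(g)(x)`. -/
theorem solution_simplification (ρ μ : ℝ → ℝ) (Kρ Kμ : NNReal)
    (hρlip : LipschitzOnWith Kρ ρ (Icc (0 : ℝ) 1))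
    (hμlip : LipschitzOnWith Kμ μ (Icc (0 : ℝ) 1))
    (hρnonneg : ∀ t ∈ Icc (0 : ℝ) 1, 0 ≤ ρ t)
    (hμnonneg : ∀ t ∈ Icc (0 : ℝ) 1, 0 ≤ μ t)
    (hρpos : ∀ t ∈ Ioo (0 : ℝ) 1, 0 < ρ t)
    (c₁ : ℝ) (hc₁ : c₁ = ∫ t in (0 : ℝ)..1, t * ρ t)
    (φ : ℝ → ℝ)
    (hφ : ∀ x ∈ Ioo (0 : ℝ) 1,
      φ x = 2 * ρ x * Real.log (x / (1 - x)) -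
        2 * ∫ t in (0 : ℝ)..1, (ρ t - ρ x) / (t - x))
    (h341 : ∀ x ∈ Ioo (0 : ℝ) 1,
      2 * μ x * Real.log (x / (1 - x)) -
          2 * (∫ t in (0 : ℝ)..1, (μ t - μ x) / (t - x)) =
        2 * (x - c₁) - φ x * μ x / ρ x)
    (g : ℝ → ℝ) (hg : ContinuousOn g (Icc (0 : ℝ) 1))
    (h : ℝ → ℝ) (Kh : NNReal) (hhlip : LipschitzOnWith Kh h (Icc (0 : ℝ) 1))
    (hh : ∀ x ∈ Ioo (0 : ℝ) 1, h x = μ x * g x / ρ x)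
    (x : ℝ) (hx : x ∈ Ioo (0 : ℝ) 1) :
    φ x * (μ x / ρ x) * g x -
        (∫ t in (0 : ℝ)..1, (h t - h x) / (t - x) * ρ t) =
      (x - c₁) * g x - ∫ t in (0 : ℝ)..1, (g t - g x) / (t - x) * μ t := by
  have φ_eq : φ x = reducer ρ x := by simpa only [reducer, slope_def_field] using hφ x hx
  have reducer_μ : reducer μ x = 2 * (x - c₁) - reducer ρ x * μ x / ρ x := by
    simpa only [reducer, slope_def_field, φ_eq] using h341 x hx
  simpa only [divDiffOperator, slope_def_field, φ_eq] using
    solution_simplification_general hρlip hμlip hhlip (fun t ht => (hρpos t ht).ne') hh hx reducer_μ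
end

section
/- Let Lₙ(x) = Σ_{k=0}^{n} binom(n,k)·(−1)ᵏ·xᵏ/k! be the Laguerre polynomials, orthonormal for the density ρ(x) = e^{−x} on [0,∞). Then for every n ≥ 1: ∫₀^∞ ∫₀^∞ ((Lₙ(t)−Lₙ(x))/(t−x))·e^{−t}·e^{−x} dt dx = −(1/n)·Σ_{k=0}^{n−1} 1/binom(n−1,k). (By Corollary 2.4 this double integral is the Fourier coefficient Cₙ(φ) of the reducer φ of the exponential density, exhibiting the row sums of the Leibniz harmonic triangle.) -/
open MeasureTheory Filter Set Finset
open scoped Nat Polynomial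

/-!
The divided difference of `tᵏ` is `∑_{i<k} tⁱ xᵏ⁻¹⁻ⁱ`, whose double integral against
`e^{-t} e^{-x}` is `∑_{i<k} i! (k-1-i)! = k! ℓₖ`, where `ℓₖ` is the `k`-th row sum of the Leibniz
harmonic triangle. The factor `k!` cancels the denominator in the Laguerre polynomial, leaving the
binomial transform `∑ₖ (-1)ᵏ (n choose k) ℓₖ`. By the beta integral,
`ℓₖ = ∫₀¹ (uᵏ - (1-u)ᵏ) / (u - (1-u)) du`. The binomial transform replaces `uᵏ - (1-u)ᵏ` by
`(1-u)ⁿ - uⁿ`, so it sends the sequence `ℓ` to `-ℓ`.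
-/

section BinomialTransform

variable {R : Type*} [CommRing R]

theorem sum_neg_one_pow_mul_choose_mul_pow (x : R) (n : ℕ) :
    ∑ k ∈ range (n + 1), (-1) ^ k * (n.choose k : R) * x ^ k = (1 - x) ^ n := by
  rw [sub_eq_neg_add, add_pow]
  refine sum_congr rfl fun k _ ↦ ?_
  rw [neg_pow x, one_pow]
  ring

theorem sum_neg_one_pow_mul_choose_mul_geom_sum₂_mul_sub {u v : R} (huv : u + v = 1) (n : ℕ) :
    (∑ k ∈ range (n + 1), (-1) ^ k * (n.choose k : R) * ∑ i ∈ range k, u ^ i * v ^ (k - 1 - i)) *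
      (u - v) = (-∑ i ∈ range n, u ^ i * v ^ (n - 1 - i)) * (u - v) := by
  have geom (k : ℕ) : (∑ i ∈ range k, u ^ i * v ^ (k - 1 - i)) * (u - v) = u ^ k - v ^ k :=
    (Commute.all u v).geom_sum₂_mul k
  calc
    _ = ∑ k ∈ range (n + 1), ((-1) ^ k * (n.choose k : R) * u ^ k -
          (-1) ^ k * (n.choose k : R) * v ^ k) := by
      rw [sum_mul]
      exact sum_congr rfl fun k _ ↦ by rw [mul_assoc, geom, mul_sub]
    _ = (1 - u) ^ n - (1 - v) ^ n := by
      simp only [sum_sub_distrib, sum_neg_one_pow_mul_choose_mul_pow]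
    _ = v ^ n - u ^ n := by
      rw [sub_eq_of_eq_add' huv.symm, sub_eq_of_eq_add huv.symm]
    _ = _ := by rw [neg_mul, geom, neg_sub]

theorem sum_neg_one_pow_mul_choose_mul_geom_sum₂ {u v : R} (huv : u + v = 1) (n : ℕ) :
    ∑ k ∈ range (n + 1), (-1) ^ k * (n.choose k : R) * ∑ i ∈ range k, u ^ i * v ^ (k - 1 - i) =
      -∑ i ∈ range n, u ^ i * v ^ (n - 1 - i) := by
  -- `u - v` may be a zero divisor, so cancel it in `ℤ[X]` and then specialize `X` to `u`.
  have hX : (Polynomial.X - (1 - Polynomial.X) : ℤ[X]) ≠ 0 := fun h ↦ by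
    simpa using congrArg (Polynomial.eval 0) h
  have generic := mul_right_cancel₀ hX
    (sum_neg_one_pow_mul_choose_mul_geom_sum₂_mul_sub (add_sub_cancel Polynomial.X 1) n)
  simpa [← eq_sub_of_add_eq' huv] using congrArg (Polynomial.aeval u) generic

end BinomialTransform

section Leibniz

theorem integral_pow_mul_one_sub_pow (i j : ℕ) :
    ∫ x in (0 : ℝ)..1, x ^ i * (1 - x) ^ j = i ! * j ! / (i + j + 1)! := by
  have hbeta := Complex.betaIntegral_eq_Gamma_mul_div (i + 1) (j + 1)
    (by norm_cast; positivity) (by norm_cast; positivity)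
  have hadd : (i + 1 + (j + 1) : ℂ) = (i + j + 1 : ℕ) + 1 := by push_cast; ring
  simp only [hadd, Complex.Gamma_nat_eq_factorial, Complex.betaIntegral, add_sub_cancel_right,
    Complex.cpow_natCast] at hbeta
  apply Complex.ofReal_injective
  rw [← intervalIntegral.integral_ofReal]
  push_cast
  exact hbeta

/-- The sum of the `n`-th row `1 / (n * (n - 1).choose k)`, `k < n`, of the Leibniz harmonic
triangle, with rows numbered from `1`; the value at `n = 0` is the empty sum `0`. -/
noncomputable def leibnizRowSum (n : ℕ) : ℝ :=
  1 / (n : ℝ) * ∑ k ∈ range n, 1 / ((n - 1).choose k : ℝ)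

theorem factorial_mul_factorial_div_factorial {n i : ℕ} (hi : i < n) :
    (i ! * (n - 1 - i)! : ℝ) / n ! = 1 / (n : ℝ) * (1 / ((n - 1).choose i : ℝ)) := by
  rw [Nat.cast_choose ℝ (Nat.le_sub_one_of_lt hi), ← Nat.mul_factorial_pred (Nat.ne_zero_of_lt hi)]
  push_cast
  field_simp

theorem leibnizRowSum_eq_sum_factorial (n : ℕ) :
    leibnizRowSum n = (∑ i ∈ range n, (i ! * (n - 1 - i)! : ℝ)) / n ! := by
  rw [leibnizRowSum, mul_sum, sum_div]
  exact sum_congr rfl fun i hi ↦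
    (factorial_mul_factorial_div_factorial (Finset.mem_range.1 hi)).symm

theorem integral_geom_sum₂_one_sub (n : ℕ) :
    ∫ u in (0 : ℝ)..1, ∑ i ∈ range n, u ^ i * (1 - u) ^ (n - 1 - i) = leibnizRowSum n := by
  rw [leibnizRowSum_eq_sum_factorial, sum_div, intervalIntegral.integral_finsetSum
    fun i _ ↦ Continuous.intervalIntegrable (by fun_prop) _ _]
  refine sum_congr rfl fun i hi ↦ ?_
  have hsum : i + (n - 1 - i) + 1 = n := by grind
  rw [integral_pow_mul_one_sub_pow, hsum]

theorem sum_neg_one_pow_mul_choose_mul_leibnizRowSum (n : ℕ) :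
    ∑ k ∈ range (n + 1), (-1) ^ k * (n.choose k : ℝ) * leibnizRowSum k = -leibnizRowSum n := by
  simp only [← integral_geom_sum₂_one_sub, ← intervalIntegral.integral_const_mul]
  rw [← intervalIntegral.integral_finsetSum
    fun k _ ↦ Continuous.intervalIntegrable (by fun_prop) _ _, ← intervalIntegral.integral_neg]
  simp only [sum_neg_one_pow_mul_choose_mul_geom_sum₂ (add_sub_cancel _ (1 : ℝ))]

end Leibniz

section SecondaryPolynomial

variable {μ ν : Measure ℝ} {ρ σ : ℝ → ℝ}

/-- The secondary polynomial of `p` for the density `ρ` with respect to `μ`, as a function on `ℝ`.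
At `t = x` the integrand is `0` instead of `p'(x) ρ(x)`, which is harmless when `μ` has no
atoms. -/
noncomputable def secondaryPolynomial (μ : Measure ℝ) (ρ : ℝ → ℝ) (p : ℝ[X]) (x : ℝ) : ℝ :=
  ∫ t, (p.eval t - p.eval x) / (t - x) * ρ t ∂μ

theorem eval_sub_eval_div_sub {K : Type*} [Field K] (p : K[X]) {t x : K} (htx : t ≠ x) :
    (p.eval t - p.eval x) / (t - x) =
      p.sum fun k c ↦ c * ∑ i ∈ range k, t ^ i * x ^ (k - 1 - i) := by
  simp only [Polynomial.eval_eq_sum, Polynomial.sum_def, ← sum_sub_distrib, sum_div, ← mul_sub,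
    mul_div_assoc, (Commute.all t x).geom_sum₂ htx]

theorem secondaryPolynomial_eq_sum [NullSingletonClass μ]
    (hρ : ∀ k : ℕ, Integrable (fun t ↦ t ^ k * ρ t) μ) (p : ℝ[X]) (x : ℝ) :
    secondaryPolynomial μ ρ p x =
      p.sum fun k c ↦ c * ∑ i ∈ range k, (∫ t, t ^ i * ρ t ∂μ) * x ^ (k - 1 - i) := by
  calc
    _ = ∫ t, p.sum fun k c ↦ c * ∑ i ∈ range k, t ^ i * ρ t * x ^ (k - 1 - i) ∂μ := by
      refine integral_congr_ae ?_
      filter_upwards [μ.ae_ne x] with t htx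
      simp only [eval_sub_eval_div_sub p htx, Polynomial.sum_def, sum_mul, mul_assoc,
        mul_comm (ρ t)]
    _ = _ := by
      have hterm (k i : ℕ) : Integrable (fun t ↦ t ^ i * ρ t * x ^ (k - 1 - i)) μ :=
        (hρ i).mul_const _
      simp only [Polynomial.sum_def]
      rw [integral_finsetSum _ fun k _ ↦ (integrable_finsetSum _ fun i _ ↦ hterm k i).const_mul _]
      simp only [integral_const_mul, integral_finsetSum _ fun i _ ↦ hterm _ i, integral_mul_const]

theorem integral_secondaryPolynomial_mul [NullSingletonClass μ]
    (hρ : ∀ k : ℕ, Integrable (fun t ↦ t ^ k * ρ t) μ)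
    (hσ : ∀ k : ℕ, Integrable (fun x ↦ x ^ k * σ x) ν) (p : ℝ[X]) :
    ∫ x, secondaryPolynomial μ ρ p x * σ x ∂ν = p.sum fun k c ↦
      c * ∑ i ∈ range k, (∫ t, t ^ i * ρ t ∂μ) * ∫ x, x ^ (k - 1 - i) * σ x ∂ν := by
  have hterm (k i : ℕ) :
      Integrable (fun x ↦ (∫ t, t ^ i * ρ t ∂μ) * (x ^ (k - 1 - i) * σ x)) ν :=
    (hσ _).const_mul _
  simp only [secondaryPolynomial_eq_sum hρ, Polynomial.sum_def, sum_mul, mul_assoc]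
  rw [integral_finsetSum _ fun k _ ↦ (integrable_finsetSum _ fun i _ ↦ hterm k i).const_mul _]
  simp only [integral_const_mul, integral_finsetSum _ fun i _ ↦ hterm _ i]

end SecondaryPolynomial

section Laguerre

theorem integrableOn_pow_mul_exp_neg_Ioi (k : ℕ) :
    IntegrableOn (fun t : ℝ ↦ t ^ k * Real.exp (-t)) (Ioi 0) := by
  simpa [mul_comm] using Real.GammaIntegral_convergent (s := k + 1) (by positivity)

theorem integral_pow_mul_exp_neg_Ioi (k : ℕ) :
    ∫ t in Ioi (0 : ℝ), t ^ k * Real.exp (-t) = k ! := by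
  simpa [mul_comm, Real.Gamma_nat_eq_factorial] using
    (Real.Gamma_eq_integral (s := k + 1) (by positivity)).symm

theorem integral_secondaryPolynomial_exp_neg_mul (p : ℝ[X]) :
    ∫ x in Ioi (0 : ℝ), secondaryPolynomial (volume.restrict (Ioi 0)) (fun t ↦ Real.exp (-t)) p x *
      Real.exp (-x) = p.sum fun k c ↦ c * (k ! * leibnizRowSum k) := by
  rw [integral_secondaryPolynomial_mul integrableOn_pow_mul_exp_neg_Ioi
    integrableOn_pow_mul_exp_neg_Ioi]
  have hfact (k : ℕ) : (k ! : ℝ) ≠ 0 := mod_cast k.factorial_ne_zero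
  simp only [integral_pow_mul_exp_neg_Ioi, leibnizRowSum_eq_sum_factorial,
    mul_div_cancel₀ _ (hfact _)]

/-- The Laguerre polynomial `Lₙ`, normalized to be orthonormal for the density `e^{-x}` on
`[0, ∞)`, given by its explicit coefficients. -/
noncomputable def laguerre (n : ℕ) : ℝ[X] :=
  ∑ k ∈ range (n + 1), Polynomial.monomial k ((-1) ^ k * (n.choose k : ℝ) / k !)

theorem eval_laguerre (n : ℕ) (x : ℝ) :
    (laguerre n).eval x =
      ∑ k ∈ range (n + 1), (n.choose k : ℝ) * (-1 : ℝ) ^ k * x ^ k / (k ! : ℝ) := by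
  simp only [laguerre, Polynomial.eval_finsetSum, Polynomial.eval_monomial]
  exact sum_congr rfl fun k _ ↦ by ring

theorem coeff_laguerre (n k : ℕ) :
    (laguerre n).coeff k = (-1) ^ k * (n.choose k : ℝ) / k ! := by
  simp +contextual [laguerre, Polynomial.coeff_monomial, Nat.choose_eq_zero_of_lt]

theorem natDegree_laguerre_lt (n : ℕ) : (laguerre n).natDegree < n + 1 :=
  Nat.lt_succ_of_le <| Polynomial.natDegree_sum_le_of_forall_le _ _ fun _ hk ↦
    (Polynomial.natDegree_monomial_le _).trans (Nat.le_of_lt_succ (Finset.mem_range.1 hk))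

theorem integral_secondaryPolynomial_laguerre_mul_exp_neg (n : ℕ) :
    ∫ x in Ioi (0 : ℝ), secondaryPolynomial (volume.restrict (Ioi 0)) (fun t ↦ Real.exp (-t))
      (laguerre n) x * Real.exp (-x) = -leibnizRowSum n := by
  have hcancel (k : ℕ) : (-1) ^ k * (n.choose k : ℝ) / k ! * (k ! * leibnizRowSum k) =
      (-1) ^ k * (n.choose k : ℝ) * leibnizRowSum k := by
    field_simp
  rw [integral_secondaryPolynomial_exp_neg_mul,
    Polynomial.sum_over_range' _ (fun _ ↦ by rw [zero_mul]) _ (natDegree_laguerre_lt n)]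
  simp only [coeff_laguerre, hcancel, sum_neg_one_pow_mul_choose_mul_leibnizRowSum]

end Laguerre

/-- Fourier coefficients of the reducer of the exponential density in the Laguerre system
`Lₙ(x) = Σ_{k=0}^{n} binom(n,k)·(−1)ᵏ·xᵏ/k!`: for `n ≥ 1`,
`∫₀^∞∫₀^∞ ((Lₙ(t)−Lₙ(x))/(t−x))·e^{−t}·e^{−x} dt dx = −(1/n)·Σ_{k=0}^{n−1} 1/binom(n−1,k)`,
exhibiting the row sums of the Leibniz harmonic triangle. -/
theorem fourier_coefficients_reducer_laguerre
    (L : ℕ → ℝ → ℝ)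
    (hL : ∀ n x, L n x = ∑ k ∈ Finset.range (n + 1),
      (Nat.choose n k : ℝ) * (-1 : ℝ) ^ k * x ^ k / (Nat.factorial k : ℝ))
    (n : ℕ) (hn : 1 ≤ n) :
    (∫ x in Ioi (0 : ℝ), ∫ t in Ioi (0 : ℝ),
        (L n t - L n x) / (t - x) * Real.exp (-t) * Real.exp (-x)) =
      -(1 / (n : ℝ)) * ∑ k ∈ Finset.range n, 1 / (Nat.choose (n - 1) k : ℝ) := by
  have hL' (x : ℝ) : L n x = (laguerre n).eval x := by rw [hL, eval_laguerre]
  calc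
    _ = ∫ x in Ioi (0 : ℝ), secondaryPolynomial (volume.restrict (Ioi 0))
          (fun t ↦ Real.exp (-t)) (laguerre n) x * Real.exp (-x) := by
      simp only [hL', secondaryPolynomial, integral_mul_const]
    _ = -leibnizRowSum n := integral_secondaryPolynomial_laguerre_mul_exp_neg n
    _ = _ := by rw [leibnizRowSum, neg_mul]
end
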